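/- For every ε ∈ (0,π) there exist constants C > 0 and t₀ > 0 such that for all t ∈ (0,t₀) and all δ ∈ (0, π−ε], | (4πt)^{11/2}·(sin δ/δ)⁵·e^{δ²/(4t)}·q_t(cos δ) − 1 − (25 − 20(sin δ − δ·cos δ)/(δ²·sin δ))·t | ≤ C·t². That is, q_t(cos δ) = (1/(4πt)^{11/2})·(δ/sin δ)⁵·e^{−δ²/(4t)}·(1 + (25 − 20(sin δ − δ cos δ)/(δ² sin δ))·t + t²·R₁(t,δ)) with R₁ uniformly bounded as t → 0 on δ ∈ (0, π−ε]. -/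

import Mathlib

open Real MeasureTheory Filter Topology

/-- Jacobi polynomial `P_k^{3,b}` (with `b = m+3` octonionic, `b = m+1` quaternionic),
given by the polynomial extension of the Rodrigues formula. -/
noncomputable def jacP (k b : ℕ) : Polynomial ℝ :=
  Polynomial.C ((-1 : ℝ) ^ k / (2 ^ k * (Nat.factorial k : ℝ))) *
    (Polynomial.derivative^[k]
        ((1 - Polynomial.X) ^ (k + 3) * (1 + Polynomial.X) ^ (b + k)) /
      ((1 - Polynomial.X) ^ 3 * (1 + Polynomial.X) ^ b))

/-- Normalized eigenfunction `h_m` of the radial Laplacian on `S^7`. -/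
noncomputable def hOct (m : ℕ) (η : ℝ) : ℝ :=
  (Real.Gamma (7 / 2) / (Real.sqrt π * Real.Gamma 3)) *
    ∫ φ in (0 : ℝ)..π,
      (((Real.cos η : ℂ) + Complex.I * ((Real.sin η * Real.cos φ : ℝ) : ℂ)) ^ m).re *
        (Real.sin φ) ^ 5

/-- Coefficient `α_{k,m}`. -/
noncomputable def alphOct (k m : ℕ) : ℝ :=
  (96 / π ^ 8) * (m + 3) * (2 * k + m + 7) *
    (Nat.choose (k + m + 6) (k + m + 3)) * (Nat.choose (m + 5) m)

/-- Subelliptic heat kernel of the octonionic Hopf fibration, in cylindric coordinates. -/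
noncomputable def pOct (t r η : ℝ) : ℝ :=
  ∑' m : ℕ, ∑' k : ℕ,
    alphOct k m * hOct m η * Real.exp (-(4 * ((k * (k + m + 7) + 2 * m : ℕ) : ℝ)) * t) *
      (Real.cos r) ^ m * (jacP k (m + 3)).eval (Real.cos (2 * r))

/-- Coefficient `β_{k,m}` of the quaternionic heat kernel. -/
noncomputable def betQ (k m : ℕ) : ℝ :=
  (Real.Gamma 4 / (2 * π ^ 6)) * (2 * k + m + 5) * (m + 1) *
    (Nat.choose (k + m + 4) (k + m + 1))

/-- Subelliptic heat kernel of the quaternionic Hopf fibration on `S^11`. -/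
noncomputable def pQuat (t r η : ℝ) : ℝ :=
  ∑' m : ℕ, ∑' k : ℕ,
    betQ k m * Real.exp (-(4 * ((k * (k + m + 5) + 2 * m : ℕ) : ℝ)) * t) *
      (Real.sin ((m + 1) * η) / Real.sin η) *
      (Real.cos r) ^ m * (jacP k (m + 1)).eval (Real.cos (2 * r))

/-- Gegenbauer polynomial `C_m^5` (polynomial extension to all real `x`). -/
noncomputable def geg5 (m : ℕ) (x : ℝ) : ℝ :=
  ∑ j ∈ Finset.range (m / 2 + 1),
    (-1 : ℝ) ^ j * (Nat.factorial (m - j + 4)) /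
      ((Nat.factorial 4) * (Nat.factorial j) * (Nat.factorial (m - 2 * j))) * (2 * x) ^ (m - 2 * j)

/-- Radial heat kernel of the round sphere `S^11`, as a function of `cos δ`. -/
noncomputable def qS11 (t x : ℝ) : ℝ :=
  (Real.Gamma 5 / (2 * π ^ 6)) *
    ∑' m : ℕ, (m + 5) * Real.exp (-((m * (m + 10) : ℕ) : ℝ) * t) * geg5 m x

/-- The kernel `g_t(η,y)` appearing in the integral representation. -/
noncomputable def gInt (t η y : ℝ) : ℝ :=
  (Real.sin η)⁻¹ ^ 3 *
    (Real.cos (η * y / (2 * t)) * (2 * y) * (η - 3 * t * Real.cot η) +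
      Real.sin (η * y / (2 * t)) *
        (8 * t ^ 2 * Real.cot η ^ 2 + 4 * t ^ 2 * ((Real.sin η)⁻¹) ^ 2 -
          6 * t * η * Real.cot η + 2 * t + η ^ 2 - y ^ 2))

/-- Theta-type function `V(t,δ)`. -/
noncomputable def Vtheta (t δ : ℝ) : ℝ :=
  (1 / Real.sqrt (4 * π * t)) * ∑' k : ℤ, Real.exp (-(δ - 2 * k * π) ^ 2 / (4 * t))

/-- The operator `f ↦ -(1/(2π sin δ)) f'`. -/
noncomputable def Dop (f : ℝ → ℝ) : ℝ → ℝ :=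
  fun δ => -(1 / (2 * π * Real.sin δ)) * deriv f δ



/-- Taylor coefficients of the `j`-th derivative of `s ↦ cosh √s`. -/
noncomputable def cHc (j n : ℕ) : ℝ := (n + j).factorial / (n.factorial * (2 * n + 2 * j).factorial)

/-- The `j`-th derivative of the entire function `s ↦ cosh √s`. -/
noncomputable def HH (j : ℕ) (s : ℝ) : ℝ := ∑' n : ℕ, cHc j n * s ^ n

lemma cHc_nonneg (j n : ℕ) : 0 ≤ cHc j n := by unfold cHc; positivity

lemma cHc_le_aux (j n : ℕ) : cHc (j + 1) n ≤ cHc j n := by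
  unfold cHc
  have h1 : (n + (j + 1)).factorial = (n + j + 1) * (n + j).factorial := Nat.factorial_succ _
  have h2 : (2 * n + 2 * (j + 1)).factorial
      = (2 * n + 2 * j + 2) * ((2 * n + 2 * j + 1) * (2 * n + 2 * j).factorial) := by
    rw [show 2 * n + 2 * (j + 1) = (2 * n + 2 * j + 1) + 1 by ring, Nat.factorial_succ,
      Nat.factorial_succ]
  rw [h1, h2]
  have a := Nat.factorial_pos (n + j)
  have b := Nat.factorial_pos (2 * n + 2 * j)
  have c := Nat.factorial_pos n
  have a' : (0 : ℝ) < (n + j).factorial := by exact_mod_cast a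
  have b' : (0 : ℝ) < (2 * n + 2 * j).factorial := by exact_mod_cast b
  have c' : (0 : ℝ) < n.factorial := by exact_mod_cast c
  push_cast
  rw [div_le_div_iff₀ (by positivity) (by positivity)]
  have : (0:ℝ) ≤ (n + j).factorial * n.factorial * (2 * n + 2 * j).factorial *
    ((2 * n + 2 * j + 2) * (2 * n + 2 * j + 1) - (n + j + 1)) := by
    refine mul_nonneg (by positivity) ?_
    have hn : (0:ℝ) ≤ n := by positivity
    have hj : (0:ℝ) ≤ j := by positivity
    nlinarith [mul_nonneg hn hj, mul_nonneg hn hn, mul_nonneg hj hj]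
  nlinarith [this]

lemma cHc_le (j n : ℕ) : cHc j n ≤ 1 / (2 * n).factorial := by
  induction j with
  | zero =>
    unfold cHc
    have c' : (n.factorial : ℝ) ≠ 0 := by exact_mod_cast (Nat.factorial_pos n).ne'
    simp only [add_zero, mul_zero]
    rw [div_mul_eq_div_div, div_self c']
  | succ j ih => exact (cHc_le_aux j n).trans ih

lemma cHc_succ (j n : ℕ) : cHc j (n + 1) * (n + 1) = cHc (j + 1) n := by
  unfold cHc
  rw [show 2 * (n + 1) + 2 * j = 2 * n + 2 * (j + 1) by ring, show n + 1 + j = n + (j + 1) by ring,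
    Nat.factorial_succ n]
  have c' : (n.factorial : ℝ) ≠ 0 := by exact_mod_cast (Nat.factorial_pos n).ne'
  have d' : ((2 * n + 2 * (j+1)).factorial : ℝ) ≠ 0 := by exact_mod_cast (Nat.factorial_pos _).ne'
  push_cast
  field_simp

lemma hasSum_cosh_sqrt (s : ℝ) :
    HasSum (fun n : ℕ => 1 / ((2 * n).factorial : ℝ) * |s| ^ n) (Real.cosh (√|s|)) := by
  have := Real.hasSum_cosh (√|s|)
  convert this using 2 with n
  rw [pow_mul, Real.sq_sqrt (abs_nonneg _)]; ring

lemma HH_term_le (j n : ℕ) (s : ℝ) :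
    ‖cHc j n * s ^ n‖ ≤ 1 / ((2 * n).factorial : ℝ) * |s| ^ n := by
  rw [norm_mul, norm_pow, Real.norm_eq_abs, Real.norm_eq_abs, abs_of_nonneg (cHc_nonneg _ _)]
  exact mul_le_mul_of_nonneg_right (cHc_le _ _) (by positivity)

lemma HH_summable (j : ℕ) (s : ℝ) : Summable (fun n : ℕ => cHc j n * s ^ n) :=
  Summable.of_norm_bounded (hasSum_cosh_sqrt s).summable (fun n => HH_term_le j n s)

lemma HH_abs_le (j : ℕ) (s : ℝ) : |HH j s| ≤ Real.exp (√|s|) := by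
  have h1 : ‖HH j s‖ ≤ Real.cosh (√|s|) :=
    tsum_of_norm_bounded (hasSum_cosh_sqrt s) (fun n => HH_term_le j n s)
  rw [Real.norm_eq_abs] at h1
  refine h1.trans ?_
  rw [Real.cosh_eq]
  have : Real.exp (-√|s|) ≤ Real.exp (√|s|) := Real.exp_le_exp.2 (by
    have := Real.sqrt_nonneg |s|; linarith)
  linarith

lemma HH_hasDerivAt (j : ℕ) (s : ℝ) : HasDerivAt (HH j) (HH (j + 1) s) s := by
  set R : ℝ := |s| + 1 with hR
  have hR0 : 0 < R := by positivity
  have hsum : ∀ y : ℝ, HasSum (fun n : ℕ => cHc j n * (n * y ^ (n - 1))) (HH (j + 1) y) := by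
    intro y
    rw [← hasSum_nat_add_iff' 1]
    simp only [Finset.range_one, Finset.sum_singleton, Nat.cast_zero, zero_mul, mul_zero, sub_zero]
    have he : (fun n : ℕ => cHc j (n + 1) * (((n + 1 : ℕ) : ℝ) * y ^ (n + 1 - 1)))
        = fun n : ℕ => cHc (j + 1) n * y ^ n := by
      funext n
      rw [← cHc_succ]; push_cast; ring
    rw [he]
    exact (HH_summable (j + 1) y).hasSum
  have key := hasDerivAt_tsum_of_isPreconnected (𝕜 := ℝ) (F := ℝ) (t := Metric.ball (0:ℝ) R)
    (g := fun (n : ℕ) (y : ℝ) => cHc j n * y ^ n)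
    (g' := fun (n : ℕ) (y : ℝ) => cHc j n * (n * y ^ (n - 1)))
    (u := fun (n : ℕ) => cHc j n * (n * R ^ (n - 1))) (y₀ := 0) (y := s)
    (hsum R).summable Metric.isOpen_ball (convex_ball _ _).isPreconnected ?_ ?_ ?_ ?_ ?_
  · rw [(hsum s).tsum_eq] at key
    exact key
  · intro n y _
    exact (hasDerivAt_pow n y).const_mul _
  · intro n y hy
    have : |y| < R := by simpa using hy
    rw [norm_mul, norm_mul, norm_pow, Real.norm_eq_abs, Real.norm_eq_abs, Real.norm_eq_abs,
      abs_of_nonneg (cHc_nonneg _ _), abs_of_nonneg (by positivity : (0:ℝ) ≤ n)]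
    refine mul_le_mul_of_nonneg_left ?_ (cHc_nonneg _ _)
    gcongr
  · simpa using hR0
  · exact HH_summable j 0
  · simp [hR]

lemma HH_continuous (j : ℕ) : Continuous (HH j) :=
  continuous_iff_continuousAt.2 fun s => (HH_hasDerivAt j s).continuousAt

lemma HH_zero_cosh (d : ℝ) : HH 0 (d ^ 2) = Real.cosh d := by
  rw [← (Real.hasSum_cosh d).tsum_eq]
  refine tsum_congr fun n => ?_
  have c' : (n.factorial : ℝ) ≠ 0 := by exact_mod_cast (Nat.factorial_pos n).ne'
  simp only [cHc, add_zero, mul_zero]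
  rw [div_mul_eq_div_div, div_self c', pow_mul]; ring

lemma HH_zero_cos (d : ℝ) : HH 0 (-d ^ 2) = Real.cos d := by
  rw [← (Real.hasSum_cos d).tsum_eq]
  refine tsum_congr fun n => ?_
  have c' : (n.factorial : ℝ) ≠ 0 := by exact_mod_cast (Nat.factorial_pos n).ne'
  simp only [cHc, add_zero, mul_zero]
  rw [div_mul_eq_div_div, div_self c', pow_mul, neg_pow]; ring

lemma HH_comp_hasDerivAt (j : ℕ) (d : ℝ) :
    HasDerivAt (fun d : ℝ => HH j (-d ^ 2)) (HH (j + 1) (-d ^ 2) * (-(2 * d))) d := by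
  have h : HasDerivAt (fun d : ℝ => -d ^ 2) (-(2 * d)) d := by
    simpa using (hasDerivAt_pow 2 d).fun_neg
  exact (HH_hasDerivAt j (-d ^ 2)).comp d h

lemma HH_one_sin (d : ℝ) : 2 * d * HH 1 (-d ^ 2) = Real.sin d := by
  have h1 := HH_comp_hasDerivAt 0 d
  have h2 : (fun d : ℝ => HH 0 (-d ^ 2)) = Real.cos := by funext d; exact HH_zero_cos d
  rw [h2] at h1
  have := h1.unique (Real.hasDerivAt_cos d)
  simp only [zero_add] at this
  linarith

lemma HH_two_eq (d : ℝ) : 4 * d ^ 2 * HH 2 (-d ^ 2) = 2 * HH 1 (-d ^ 2) - Real.cos d := by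
  have h1 := HH_comp_hasDerivAt 1 d
  have h2 : (fun d : ℝ => 2 * d * HH 1 (-d ^ 2)) = Real.sin := by funext d; exact HH_one_sin d
  have h3 := (((hasDerivAt_id d).const_mul 2).mul h1)
  have h4 := h3.unique ((Real.hasDerivAt_sin d).congr_of_eventuallyEq
    (Filter.Eventually.of_forall fun x => congrFun h2 x))
  simp only [id, Nat.reduceAdd] at h4
  linarith

lemma HH_one_zero : HH 1 0 = 1 / 2 := by
  unfold HH
  rw [tsum_eq_single 0]
  · simp [cHc]
  · intro n hn; simp [hn]

/-- Gaussian-weighted series of dilates of `HH j`. -/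
noncomputable def GG (e σ τ : ℝ) (j : ℕ) (w : ℝ) : ℝ :=
  ∑' k : ℕ, Real.exp (-τ * ((k : ℝ) + 1) ^ 2) *
    ((e * (σ * ((k : ℝ) + 1)) ^ 2) ^ j * HH j (e * (σ * ((k : ℝ) + 1)) ^ 2 * w))

lemma gauss_summable (σ τ R : ℝ) (hτ : 0 < τ) (j : ℕ) :
    Summable fun k : ℕ => Real.exp (-τ * ((k : ℝ) + 1) ^ 2) *
      (((σ * ((k : ℝ) + 1)) ^ 2) ^ j * Real.exp (σ * ((k : ℝ) + 1) * R)) := by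
  have h0 := (summable_pow_mul_exp_neg_nat_mul (2 * j) (zero_lt_one))
  have h1 := ((summable_nat_add_iff 1).2 h0).mul_left
    (σ ^ (2 * j) * Real.exp ((σ * R + 1) ^ 2 / (4 * τ)))
  refine Summable.of_nonneg_of_le (fun k => by positivity) (fun k => ?_) h1
  push_cast
  set x : ℝ := (k : ℝ) + 1
  have e1 : Real.exp (-τ * x ^ 2) * Real.exp (σ * x * R) ≤
      Real.exp ((σ * R + 1) ^ 2 / (4 * τ)) * Real.exp (-1 * x) := by
    rw [← Real.exp_add, ← Real.exp_add]
    apply Real.exp_le_exp.2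
    have : (σ * R + 1) ^ 2 / (4 * τ) + -1 * x - (-τ * x ^ 2 + σ * x * R)
      = (2 * τ * x - (σ * R + 1)) ^ 2 / (4 * τ) := by field_simp; ring
    have h2 : 0 ≤ (2 * τ * x - (σ * R + 1)) ^ 2 / (4 * τ) := by positivity
    linarith
  calc _ = σ ^ (2 * j) * x ^ (2 * j) * (Real.exp (-τ * x ^ 2) * Real.exp (σ * x * R)) := by
        rw [← pow_mul, mul_pow]; ring
    _ ≤ σ ^ (2 * j) * x ^ (2 * j) * (Real.exp ((σ * R + 1) ^ 2 / (4 * τ)) * Real.exp (-1 * x)) := by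
        refine mul_le_mul_of_nonneg_left e1 ?_
        rw [pow_mul, pow_mul]; positivity
    _ = _ := by ring

lemma GG_term_le (e σ τ : ℝ) (he : |e| = 1) (hσ : 0 < σ) (j : ℕ) (R w : ℝ)
    (hR : 0 ≤ R) (hw : |w| ≤ R ^ 2) (k : ℕ) :
    ‖Real.exp (-τ * ((k : ℝ) + 1) ^ 2) *
    ((e * (σ * ((k : ℝ) + 1)) ^ 2) ^ j * HH j (e * (σ * ((k : ℝ) + 1)) ^ 2 * w))‖ ≤
    Real.exp (-τ * ((k : ℝ) + 1) ^ 2) *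
      (((σ * ((k : ℝ) + 1)) ^ 2) ^ j * Real.exp (σ * ((k : ℝ) + 1) * R)) := by
  set x : ℝ := (k : ℝ) + 1
  have hx : 0 < x := by positivity
  have ha : |e * (σ * x) ^ 2| = (σ * x) ^ 2 := by
    rw [abs_mul, he, one_mul, abs_of_nonneg (by positivity)]
  rw [norm_mul, norm_mul, norm_pow, Real.norm_eq_abs, Real.norm_eq_abs, Real.norm_eq_abs, ha,
    abs_of_pos (Real.exp_pos _)]
  refine mul_le_mul_of_nonneg_left (mul_le_mul_of_nonneg_left ?_ (by positivity)) (by positivity)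
  refine (HH_abs_le _ _).trans (Real.exp_le_exp.2 ?_)
  rw [abs_mul, ha]
  apply Real.sqrt_le_iff.2 ⟨by positivity, ?_⟩
  rw [mul_pow _ R]
  gcongr

lemma GG_summable (e σ τ : ℝ) (he : |e| = 1) (hσ : 0 < σ) (hτ : 0 < τ) (j : ℕ) (w : ℝ) :
    Summable fun k : ℕ => Real.exp (-τ * ((k : ℝ) + 1) ^ 2) *
    ((e * (σ * ((k : ℝ) + 1)) ^ 2) ^ j * HH j (e * (σ * ((k : ℝ) + 1)) ^ 2 * w)) :=
  Summable.of_norm_bounded (gauss_summable σ τ (√|w|) hτ j)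
    (fun k => GG_term_le e σ τ he hσ j _ w (Real.sqrt_nonneg _)
      (Real.sq_sqrt (abs_nonneg w)).ge k)

lemma GG_hasDerivAt (e σ τ : ℝ) (he : |e| = 1) (hσ : 0 < σ) (hτ : 0 < τ) (j : ℕ) (w : ℝ) :
    HasDerivAt (GG e σ τ j) (GG e σ τ (j + 1) w) w := by
  set R : ℝ := |w| + 1 with hR
  have hR0 : 0 < R := by positivity
  refine hasDerivAt_tsum_of_isPreconnected (𝕜 := ℝ) (F := ℝ) (t := Metric.ball (0:ℝ) R)
    (g := fun (k : ℕ) (w : ℝ) => Real.exp (-τ * ((k : ℝ) + 1) ^ 2) *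
    ((e * (σ * ((k : ℝ) + 1)) ^ 2) ^ j * HH j (e * (σ * ((k : ℝ) + 1)) ^ 2 * w)))
    (g' := fun (k : ℕ) (w : ℝ) => Real.exp (-τ * ((k : ℝ) + 1) ^ 2) *
    ((e * (σ * ((k : ℝ) + 1)) ^ 2) ^ (j + 1) * HH (j + 1) (e * (σ * ((k : ℝ) + 1)) ^ 2 * w)))
    (y₀ := 0) (y := w)
    (gauss_summable σ τ (√R) hτ (j + 1)) Metric.isOpen_ball (convex_ball _ _).isPreconnected
      ?_ ?_ ?_ ?_ ?_
  · intro k y _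
    have h1 : HasDerivAt (fun y : ℝ => e * (σ * ((k : ℝ) + 1)) ^ 2 * y)
        (e * (σ * ((k : ℝ) + 1)) ^ 2) y := by
      simpa using (hasDerivAt_id y).const_mul (e * (σ * ((k : ℝ) + 1)) ^ 2)
    have h2 := (((HH_hasDerivAt j _).comp y h1).const_mul
      ((e * (σ * ((k : ℝ) + 1)) ^ 2) ^ j)).const_mul (Real.exp (-τ * ((k : ℝ) + 1) ^ 2))
    refine h2.congr_deriv ?_
    rw [pow_succ]; ring
  · intro k y hy
    have : |y| < R := by simpa using hy
    exact GG_term_le e σ τ he hσ (j + 1) (√R) y (Real.sqrt_nonneg _)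
      (by rw [Real.sq_sqrt hR0.le]; exact this.le) k
  · simpa using hR0
  · exact GG_summable e σ τ he hσ hτ j 0
  · simp [hR]



lemma GG_neg_eq (t d : ℝ) : GG (-1) 1 t 0 (d ^ 2) =
    ∑' k : ℕ, Real.exp (-t * ((k : ℝ) + 1) ^ 2) * Real.cos (((k : ℝ) + 1) * d) := by
  unfold GG
  refine tsum_congr fun k => ?_
  rw [← HH_zero_cos, pow_zero, one_mul]
  congr 2; ring

lemma GG_pos_eq (t d : ℝ) : GG 1 (π / t) (π ^ 2 / t) 0 (d ^ 2) =
    ∑' k : ℕ, Real.exp (-(π ^ 2 / t) * ((k : ℝ) + 1) ^ 2) *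
      Real.cosh (π / t * ((k : ℝ) + 1) * d) := by
  unfold GG
  refine tsum_congr fun k => ?_
  rw [← HH_zero_cosh, pow_zero, one_mul]
  congr 2; ring

lemma poisson_GG (t d : ℝ) (ht : 0 < t) :
    1 + 2 * GG (-1) 1 t 0 (d ^ 2) =
      √(π / t) * (Real.exp (-(1 / (4 * t)) * d ^ 2) *
        (1 + 2 * GG 1 (π / t) (π ^ 2 / t) 0 (d ^ 2))) := by
  have hpi := Real.pi_pos
  have hpc : (π : ℂ) ≠ 0 := by exact_mod_cast hpi.ne'
  have htc : (t : ℂ) ≠ 0 := by exact_mod_cast ht.ne'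
  have key := Complex.tsum_exp_neg_quadratic (a := ((t / π : ℝ) : ℂ))
    (by rw [Complex.ofReal_re]; positivity) (Complex.I * ((d / (2 * π) : ℝ) : ℂ))
  have hL : ∀ n : ℤ, Complex.exp (-π * ((t / π : ℝ) : ℂ) * n ^ 2 +
      2 * π * (Complex.I * ((d / (2 * π) : ℝ) : ℂ)) * n) =
      (Real.exp (-t * (n:ℝ) ^ 2) : ℂ) * Complex.exp (((n : ℝ) * d : ℝ) * Complex.I) := by
    intro n
    rw [Complex.ofReal_exp, ← Complex.exp_add]
    congr 1
    push_cast
    field_simp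
  have hR : ∀ n : ℤ, Complex.exp (-π / ((t / π : ℝ) : ℂ) *
      (n + Complex.I * (Complex.I * ((d / (2 * π) : ℝ) : ℂ))) ^ 2) =
      ((Real.exp (-(1 / (4 * t)) * d ^ 2) * (Real.exp (-(π ^ 2 / t) * (n:ℝ) ^ 2) *
        Real.exp (π / t * n * d)) : ℝ) : ℂ) := by
    intro n
    rw [← Real.exp_add, ← Real.exp_add, Complex.ofReal_exp]
    congr 1
    rw [← mul_assoc Complex.I, Complex.I_mul_I]
    push_cast
    field_simp
    ring
  simp_rw [hL, hR] at key
  have sL : Summable fun k : ℕ => Real.exp (-t * ((k : ℝ) + 1) ^ 2) := by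
    simpa using gauss_summable 1 t 0 ht 0
  have ht' : 0 < π ^ 2 / t := by positivity
  have sR : ∀ d : ℝ, Summable fun k : ℕ => Real.exp (-(π ^ 2 / t) * ((k : ℝ) + 1) ^ 2) *
      Real.exp (π / t * ((k : ℝ) + 1) * d) := by
    intro d
    simpa using gauss_summable (π / t) (π ^ 2 / t) d ht' 0
  rw [tsum_of_add_one_of_neg_add_one] at key
  rotate_left
  · refine Summable.of_norm_bounded sL fun k => ?_
    rw [norm_mul, Complex.norm_exp_ofReal_mul_I, mul_one, Complex.norm_real, Real.norm_eq_abs,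
      abs_of_pos (Real.exp_pos _)]
    push_cast; exact le_rfl
  · refine Summable.of_norm_bounded sL fun k => ?_
    rw [norm_mul, Complex.norm_exp_ofReal_mul_I, mul_one, Complex.norm_real, Real.norm_eq_abs,
      abs_of_pos (Real.exp_pos _)]
    push_cast; rw [neg_sq]
  rw [← Complex.ofReal_tsum, tsum_mul_left] at key
  rw [tsum_of_add_one_of_neg_add_one (f := fun n : ℤ => Real.exp (-(π ^ 2 / t) * (n:ℝ) ^ 2) *
        Real.exp (π / t * n * d))] at key
  rotate_left
  · simpa using sR d
  · have := sR (-d)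
    refine this.congr fun k => ?_
    push_cast
    congr 2 <;> ring
  have hre := congrArg Complex.re key
  have hc : (1 : ℂ) / ((t / π : ℝ) : ℂ) ^ (1 / 2 : ℂ) = ((√(π / t) : ℝ) : ℂ) := by
    rw [show (1 / 2 : ℂ) = ((1 / 2 : ℝ) : ℂ) by push_cast; rfl,
      ← Complex.ofReal_cpow (by positivity), ← Real.sqrt_eq_rpow, ← Complex.ofReal_one,
      ← Complex.ofReal_div]
    congr 1
    rw [one_div, ← Real.sqrt_inv, inv_div]
  rw [hc, ← Complex.ofReal_mul, Complex.ofReal_re, Complex.add_re, Complex.add_re, Complex.re_tsum,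
    Complex.re_tsum] at hre
  rotate_left
  · refine Summable.of_norm_bounded sL fun k => ?_
    rw [norm_mul, Complex.norm_exp_ofReal_mul_I, mul_one, Complex.norm_real, Real.norm_eq_abs,
      abs_of_pos (Real.exp_pos _)]
    push_cast; rw [neg_sq]
  · refine Summable.of_norm_bounded sL fun k => ?_
    rw [norm_mul, Complex.norm_exp_ofReal_mul_I, mul_one, Complex.norm_real, Real.norm_eq_abs,
      abs_of_pos (Real.exp_pos _)]
    push_cast; exact le_rfl
  simp only [Complex.re_ofReal_mul, Complex.exp_ofReal_mul_I_re] at hre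
  have e1 : ∑' k : ℕ, Real.exp (-t * (((k : ℤ) + 1 : ℤ) : ℝ) ^ 2) *
      Real.cos ((((k : ℤ) + 1 : ℤ) : ℝ) * d) = GG (-1) 1 t 0 (d ^ 2) := by
    rw [GG_neg_eq]; push_cast; rfl
  have e2 : ∑' k : ℕ, Real.exp (-t * ((-((k : ℤ) + 1) : ℤ) : ℝ) ^ 2) *
      Real.cos (((-((k : ℤ) + 1) : ℤ) : ℝ) * d) = GG (-1) 1 t 0 (d ^ 2) := by
    rw [GG_neg_eq]; refine tsum_congr fun k => ?_
    push_cast; rw [neg_sq, neg_mul ((k : ℝ) + 1), Real.cos_neg]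
  have e3 : 2 * GG 1 (π / t) (π ^ 2 / t) 0 (d ^ 2) =
      (∑' k : ℕ, Real.exp (-(π ^ 2 / t) * (((k : ℤ) + 1 : ℤ) : ℝ) ^ 2) *
        Real.exp (π / t * (((k : ℤ) + 1 : ℤ) : ℝ) * d)) +
      ∑' k : ℕ, Real.exp (-(π ^ 2 / t) * ((-((k : ℤ) + 1) : ℤ) : ℝ) ^ 2) *
        Real.exp (π / t * ((-((k : ℤ) + 1) : ℤ) : ℝ) * d) := by
    rw [GG_pos_eq, ← Summable.tsum_add, ← tsum_mul_left]
    · refine tsum_congr fun k => ?_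
      push_cast
      rw [neg_sq, Real.cosh_eq, show π / t * -((k : ℝ) + 1) * d = -(π / t * (k + 1) * d) by ring]
      ring
    · simpa using sR d
    · have := sR (-d)
      refine this.congr fun k => ?_
      push_cast
      congr 2 <;> ring
  rw [e1, e2] at hre
  rw [e3]
  norm_num at hre ⊢
  linarith


open Polynomial in
/-- Explicit form of `U_n`. -/
lemma U_explicit (n : ℕ) : Chebyshev.U ℝ (n : ℤ) =
    ∑ j ∈ Finset.range (n + 1), Polynomial.C ((-1 : ℝ) ^ j * ((n - j).choose j : ℝ)) *
      (2 * X) ^ (n - 2 * j) := by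
  induction n using Nat.twoStepInduction with
  | zero => simp
  | one => simp [Finset.sum_range_succ]
  | more n ih0 ih1 =>
    push_cast at ih1 ⊢
    rw [Finset.sum_range_succ' _ (n + 1)] at ih1
    rw [Chebyshev.U_add_two, ih0, ih1, Finset.sum_range_succ' _ (n + 2),
      Finset.sum_range_succ _ (n + 1)]
    have hz : (n + 2 - (n + 1 + 1)).choose (n + 1 + 1) = 0 := by
      apply Nat.choose_eq_zero_of_lt; omega
    rw [hz]
    have ht : ∀ i ∈ Finset.range (n + 1),
        Polynomial.C (-1 : ℝ) ^ (i + 1) * Polynomial.C ((n + 2 - (i + 1)).choose (i + 1) : ℝ) *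
          (2 * X) ^ (n + 2 - 2 * (i + 1)) =
        2 * X * (Polynomial.C (-1 : ℝ) ^ (i + 1) * Polynomial.C ((n + 1 - (i + 1)).choose (i + 1) : ℝ) *
          (2 * X) ^ (n + 1 - 2 * (i + 1))) -
        Polynomial.C (-1 : ℝ) ^ i * Polynomial.C ((n - i).choose i : ℝ) * (2 * X) ^ (n - 2 * i) := by
      intro i hi
      have hi' : i ≤ n := by simpa [Nat.lt_succ_iff] using hi
      have e1 : n + 2 - (i + 1) = (n - i) + 1 := by omega
      have e2 : n + 1 - (i + 1) = n - i := by omega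
      have e3 : n + 2 - 2 * (i + 1) = n - 2 * i := by omega
      rw [e1, e2, e3, Nat.choose_succ_succ]
      by_cases h : i + 1 ≤ n - i
      · have e4 : n - 2 * i = (n + 1 - 2 * (i + 1)) + 1 := by omega
        rw [e4, pow_succ (2 * X)]
        push_cast
        simp only [map_add, map_neg, map_one]
        ring
      · rw [Nat.choose_eq_zero_of_lt (show n - i < i + 1 by omega)]
        push_cast
        simp only [map_add, map_neg, map_one, map_zero]
        ring
    simp only [map_mul, map_pow] at ht ⊢
    rw [Finset.sum_congr rfl ht, Finset.sum_sub_distrib, ← Finset.mul_sum]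
    simp
    ring

open Polynomial in
lemma U_iter_eval (m : ℕ) (x : ℝ) :
    (derivative^[4] (Chebyshev.U ℝ ((m + 4 : ℕ) : ℤ))).eval x = 384 * geg5 m x := by
  have hk : ∀ (a : ℝ) (k : ℕ), (derivative^[4] (Polynomial.C a * (2 * X) ^ k)).eval x =
      a * (2 ^ k * (k.descFactorial 4 * x ^ (k - 4))) := by
    intro a k
    have : Polynomial.C a * (2 * X) ^ k = Polynomial.C (a * 2 ^ k) * X ^ k := by
      rw [mul_pow, map_mul, map_pow]
      simp only [map_ofNat]
      ring
    rw [this, iterate_derivative_C_mul, iterate_derivative_X_pow_eq_natCast_mul]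
    simp
    ring
  rw [U_explicit, iterate_derivative_sum, eval_finsetSum]
  simp_rw [hk]
  have hsub : Finset.range (m / 2 + 1) ⊆ Finset.range (m + 4 + 1) := by
    intro j hj; simp at hj ⊢; omega
  rw [← Finset.sum_subset hsub]
  · unfold geg5
    rw [Finset.mul_sum]
    refine Finset.sum_congr rfl fun j hj => ?_
    have hj' : 2 * j ≤ m := by simp at hj; omega
    obtain ⟨r, rfl⟩ : ∃ r, m = 2 * j + r := ⟨m - 2 * j, by omega⟩
    rw [show 2 * j + r + 4 - j = j + r + 4 by omega, show 2 * j + r + 4 - 2 * j = r + 4 by omega,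
      show 2 * j + r - j + 4 = j + r + 4 by omega, show 2 * j + r - 2 * j = r by omega,
      Nat.add_sub_cancel]
    have h1 := Nat.choose_mul_factorial_mul_factorial (show j ≤ j + r + 4 by omega)
    rw [show j + r + 4 - j = r + 4 by omega] at h1
    have h2 := Nat.factorial_mul_descFactorial (show 4 ≤ r + 4 by omega)
    rw [Nat.add_sub_cancel] at h2
    rw [← h1, ← h2]
    have f1 : (j.factorial : ℝ) ≠ 0 := by exact_mod_cast (Nat.factorial_pos _).ne'
    have f2 : (r.factorial : ℝ) ≠ 0 := by exact_mod_cast (Nat.factorial_pos _).ne'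
    have f3 : (Nat.factorial 4 : ℝ) = 24 := by norm_num [Nat.factorial]
    rw [f3, mul_pow]
    push_cast
    field_simp
    ring
  · intro j hj hj'
    simp at hj hj'
    by_cases h : m + 4 - 2 * j < 4
    · rw [Nat.descFactorial_of_lt h]; simp
    · omega

open Polynomial in
lemma T_iter_eval (m : ℕ) (x : ℝ) :
    (derivative^[5] (Chebyshev.T ℝ ((m + 5 : ℕ) : ℤ))).eval x = 384 * ((m + 5) * geg5 m x) := by
  rw [Function.iterate_succ_apply, Chebyshev.T_derivative_eq_U]
  have : ((m + 5 : ℕ) : ℤ) - 1 = ((m + 4 : ℕ) : ℤ) := by push_cast; ring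
  rw [this]
  have h2 : (((m + 5 : ℕ) : ℤ) : ℝ[X]) = Polynomial.C ((m : ℝ) + 5) := by
    simp only [map_add, map_natCast, map_ofNat]; push_cast; rfl
  rw [h2, iterate_derivative_C_mul, eval_mul, eval_C, U_iter_eval]
  ring

open Polynomial in
lemma T_iter_small (k : ℕ) (hk : k < 5) (x : ℝ) :
    (derivative^[5] (Chebyshev.T ℝ (k : ℤ))).eval x = 0 := by
  have : derivative^[5] (Chebyshev.T ℝ (k : ℤ)) = 0 := by
    apply iterate_derivative_eq_zero
    rw [Chebyshev.natDegree_T]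
    simpa using hk
  rw [this]; simp


/-- Coefficients of the fifth power of `(1/x₁) d/dw`, times `x₁ ^ 9`. -/
noncomputable def LL (x1 x2 x3 x4 x5 f1 f2 f3 f4 f5 : ℝ) : ℝ :=
  x1 ^ 4 * f5 + (-10 * x1 ^ 3 * x2) * f4 + (45 * x1 ^ 2 * x2 ^ 2 - 10 * x1 ^ 3 * x3) * f3 +
    (-105 * x1 * x2 ^ 3 + 60 * x1 ^ 2 * x2 * x3 - 5 * x1 ^ 3 * x4) * f2 +
    (105 * x2 ^ 4 - 105 * x1 * x2 ^ 2 * x3 + 10 * x1 ^ 2 * x3 ^ 2 + 15 * x1 ^ 2 * x2 * x4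
      - x1 ^ 3 * x5) * f1

lemma deriv_eq_on {f g f' g' : ℝ → ℝ} (h : ∀ w > 0, f w = g w)
    (hf : ∀ w, HasDerivAt f (f' w) w) (hg : ∀ w, HasDerivAt g (g' w) w) :
    ∀ w > 0, f' w = g' w := by
  intro w hw
  refine (hf w).unique ((hg w).congr_of_eventuallyEq ?_)
  filter_upwards [lt_mem_nhds hw] with y hy using h y hy

lemma faa_jet (X P N : ℕ → ℝ → ℝ) (hX : ∀ j w, HasDerivAt (X j) (X (j + 1) w) w)
    (hP : ∀ j w, HasDerivAt (P j) (P (j + 1) w * X 1 w) w)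
    (hN : ∀ j w, HasDerivAt (N j) (N (j + 1) w) w) (h0 : ∀ w > 0, N 0 w = P 0 w) :
    ∀ w > 0, LL (X 1 w) (X 2 w) (X 3 w) (X 4 w) (X 5 w) (N 1 w) (N 2 w) (N 3 w) (N 4 w) (N 5 w)
      = X 1 w ^ 9 * P 5 w := by
  have h1 : ∀ w > 0, N 1 w = P 1 w * X 1 w := deriv_eq_on h0 (hN 0) (hP 0)
  have h2 : ∀ w > 0, N 2 w = P 2 w * X 1 w ^ 2 + P 1 w * X 2 w := by
    refine deriv_eq_on h1 (hN 1) fun w => ?_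
    exact ((hP 1 w).fun_mul (hX 1 w)).congr_deriv (by ring)
  have h3 : ∀ w > 0, N 3 w = P 3 w * X 1 w ^ 3 + 3 * P 2 w * X 1 w * X 2 w + P 1 w * X 3 w := by
    refine deriv_eq_on h2 (hN 2) fun w => ?_
    exact (((hP 2 w).fun_mul ((hX 1 w).fun_pow 2)).fun_add
      ((hP 1 w).fun_mul (hX 2 w))).congr_deriv (by push_cast; ring)
  have h4 : ∀ w > 0, N 4 w = P 4 w * X 1 w ^ 4 + 6 * (P 3 w * (X 1 w ^ 2 * X 2 w)) +
      P 2 w * (4 * (X 1 w * X 3 w) + 3 * X 2 w ^ 2) + P 1 w * X 4 w := by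
    refine deriv_eq_on h3 (hN 3) fun w => ?_
    exact ((((hP 3 w).fun_mul ((hX 1 w).fun_pow 3)).fun_add
      ((((hP 2 w).const_mul 3).fun_mul (hX 1 w)).fun_mul (hX 2 w))).fun_add
      ((hP 1 w).fun_mul (hX 3 w))).congr_deriv (by push_cast; ring)
  have h5 : ∀ w > 0, N 5 w = P 5 w * X 1 w ^ 5 + 10 * P 4 w * X 1 w ^ 3 * X 2 w +
      P 3 w * (10 * X 1 w ^ 2 * X 3 w + 15 * X 1 w * X 2 w ^ 2) +
      P 2 w * (5 * X 1 w * X 4 w + 10 * X 2 w * X 3 w) + P 1 w * X 5 w := by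
    refine deriv_eq_on h4 (hN 4) fun w => ?_
    exact (((((hP 4 w).fun_mul ((hX 1 w).fun_pow 4)).fun_add
      (((hP 3 w).fun_mul (((hX 1 w).fun_pow 2).fun_mul (hX 2 w))).const_mul 6)).fun_add
      ((hP 2 w).fun_mul ((((hX 1 w).fun_mul (hX 3 w)).const_mul 4).fun_add
        (((hX 2 w).fun_pow 2).const_mul 3)))).fun_add
      ((hP 1 w).fun_mul (hX 4 w))).congr_deriv (by push_cast; ring)
  intro w hw
  rw [h1 w hw, h2 w hw, h3 w hw, h4 w hw, h5 w hw]
  unfold LL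
  ring

/-- `j`-th derivative of `w ↦ HH 0 (A w)`. -/
noncomputable def NN (A : ℝ) (j : ℕ) (w : ℝ) : ℝ := A ^ j * HH j (A * w)

lemma NN_hasDerivAt (A : ℝ) (j : ℕ) (w : ℝ) : HasDerivAt (NN A j) (NN A (j + 1) w) w := by
  have h1 : HasDerivAt (fun y : ℝ => A * y) A w := by
    simpa using (hasDerivAt_id w).const_mul A
  refine (((HH_hasDerivAt j _).comp w h1).const_mul (A ^ j)).congr_deriv ?_
  unfold NN; rw [pow_succ]; ring

lemma cheb_jet (k : ℕ) (w : ℝ) (hw : 0 < w) :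
    LL (NN (-1) 1 w) (NN (-1) 2 w) (NN (-1) 3 w) (NN (-1) 4 w) (NN (-1) 5 w)
      (NN (-1 * (1 * ((k : ℝ) + 1)) ^ 2) 1 w) (NN (-1 * (1 * ((k : ℝ) + 1)) ^ 2) 2 w)
      (NN (-1 * (1 * ((k : ℝ) + 1)) ^ 2) 3 w) (NN (-1 * (1 * ((k : ℝ) + 1)) ^ 2) 4 w)
      (NN (-1 * (1 * ((k : ℝ) + 1)) ^ 2) 5 w) =
    NN (-1) 1 w ^ 9 * (Polynomial.derivative^[5]
      (Polynomial.Chebyshev.T ℝ ((k + 1 : ℕ) : ℤ))).eval (Real.cos (√w)) := by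
  have hc : ∀ w > 0, NN (-1) 0 w = Real.cos (√w) := by
    intro w hw
    unfold NN
    rw [← HH_zero_cos, Real.sq_sqrt hw.le]; simp
  have := faa_jet (NN (-1)) (fun j w => (Polynomial.derivative^[j]
      (Polynomial.Chebyshev.T ℝ ((k + 1 : ℕ) : ℤ))).eval (NN (-1) 0 w))
      (NN (-1 * (1 * ((k : ℝ) + 1)) ^ 2)) (NN_hasDerivAt _) ?_ (NN_hasDerivAt _) ?_ w hw
  · rw [this, hc w hw]
  · intro j w
    rw [Function.iterate_succ_apply']
    exact ((Polynomial.derivative^[j] (Polynomial.Chebyshev.T ℝ ((k + 1 : ℕ) : ℤ))).hasDerivAt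
      _).comp w (NN_hasDerivAt (-1) 0 w)
  · intro w hw
    simp only [Function.iterate_zero, id]
    rw [hc w hw, Polynomial.Chebyshev.T_real_cos]
    unfold NN
    rw [pow_zero, one_mul, ← HH_zero_cos, mul_pow _ (√w), Real.sq_sqrt hw.le]
    push_cast
    congr 1; ring

/-- `(μ + ∂)^j` applied to a sequence of successive derivatives. -/
noncomputable def JJ (μ : ℝ) (K : ℕ → ℝ → ℝ) : ℕ → ℕ → ℝ → ℝ
  | 0, i, w => K i w
  | j + 1, i, w => μ * JJ μ K j i w + JJ μ K j (i + 1) w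

lemma JJ_hasDerivAt (μ : ℝ) (K : ℕ → ℝ → ℝ) (hK : ∀ i w, HasDerivAt (K i) (K (i + 1) w) w)
    (j i : ℕ) (w : ℝ) : HasDerivAt (JJ μ K j i) (JJ μ K j (i + 1) w) w := by
  induction j generalizing i w with
  | zero => exact hK i w
  | succ j ih => exact ((ih i w).const_mul μ).fun_add (ih (i + 1) w)

/-- Theta remainder factors. -/
noncomputable def KK (e σ τ : ℝ) (i : ℕ) (w : ℝ) : ℝ :=
  (if i = 0 then 1 else 0) + 2 * GG e σ τ i w

lemma KK_hasDerivAt (e σ τ : ℝ) (he : |e| = 1) (hσ : 0 < σ) (hτ : 0 < τ) (j : ℕ) (w : ℝ) :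
    HasDerivAt (KK e σ τ j) (KK e σ τ (j + 1) w) w := by
  refine (((GG_hasDerivAt e σ τ he hσ hτ j w).const_mul 2).const_add _).congr_deriv ?_
  simp [KK]

lemma theta_jet (t : ℝ) (ht : 0 < t) (j : ℕ) : ∀ w > 0, KK (-1) 1 t j w =
    √(π / t) * (Real.exp (-(1 / (4 * t)) * w) *
      JJ (-(1 / (4 * t))) (KK 1 (π / t) (π ^ 2 / t)) j 0 w) := by
  have hpi := Real.pi_pos
  induction j with
  | zero =>
    intro w hw
    have := poisson_GG t (√w) ht
    rw [Real.sq_sqrt hw.le] at this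
    simpa [KK, JJ] using this
  | succ j ih =>
    refine deriv_eq_on ih (KK_hasDerivAt (-1) 1 t (by simp) one_pos ht j) fun w => ?_
    have h1 : HasDerivAt (fun w : ℝ => Real.exp (-(1 / (4 * t)) * w))
        (Real.exp (-(1 / (4 * t)) * w) * (-(1 / (4 * t)))) w := by
      have := ((hasDerivAt_id w).const_mul (-(1 / (4 * t)))).exp
      simpa using this
    have h2 := JJ_hasDerivAt (-(1 / (4 * t))) (KK 1 (π / t) (π ^ 2 / t))
      (KK_hasDerivAt 1 (π / t) (π ^ 2 / t) (by simp) (by positivity) (by positivity)) j 0 w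
    refine ((h1.fun_mul h2).const_mul _).congr_deriv ?_
    simp only [JJ]
    ring

lemma LL_theta (t w : ℝ) (ht : 0 < t) (hw : 0 < w) :
    LL (NN (-1) 1 w) (NN (-1) 2 w) (NN (-1) 3 w) (NN (-1) 4 w) (NN (-1) 5 w)
      (KK (-1) 1 t 1 w) (KK (-1) 1 t 2 w) (KK (-1) 1 t 3 w) (KK (-1) 1 t 4 w) (KK (-1) 1 t 5 w) =
    2 * (NN (-1) 1 w ^ 9 * ∑' k : ℕ, Real.exp (-t * ((k : ℝ) + 1) ^ 2) * (Polynomial.derivative^[5]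
      (Polynomial.Chebyshev.T ℝ ((k + 1 : ℕ) : ℤ))).eval (Real.cos (√w))) ∧
    Summable fun k : ℕ => NN (-1) 1 w ^ 9 *
      (Real.exp (-t * ((k : ℝ) + 1) ^ 2) * (Polynomial.derivative^[5]
      (Polynomial.Chebyshev.T ℝ ((k + 1 : ℕ) : ℤ))).eval (Real.cos (√w))) := by
  have hs : ∀ j, HasSum (fun k : ℕ => Real.exp (-t * ((k : ℝ) + 1) ^ 2) *
      NN (-1 * (1 * ((k : ℝ) + 1)) ^ 2) j w) (GG (-1) 1 t j w) := fun j =>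
    (GG_summable (-1) 1 t (by simp) one_pos ht j w).hasSum
  have hcj := fun k => cheb_jet k w hw
  simp only [KK, one_ne_zero, OfNat.ofNat_ne_zero, if_false, zero_add]
  generalize NN (-1) 1 w = x1 at *
  generalize NN (-1) 2 w = x2 at *
  generalize NN (-1) 3 w = x3 at *
  generalize NN (-1) 4 w = x4 at *
  generalize NN (-1) 5 w = x5 at *
  have h := ((((((hs 5).mul_left (x1 ^ 4)).add ((hs 4).mul_left (-10 * x1 ^ 3 * x2))).add
    ((hs 3).mul_left (45 * x1 ^ 2 * x2 ^ 2 - 10 * x1 ^ 3 * x3))).add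
    ((hs 2).mul_left (-105 * x1 * x2 ^ 3 + 60 * x1 ^ 2 * x2 * x3 - 5 * x1 ^ 3 * x4))).add
    ((hs 1).mul_left (105 * x2 ^ 4 - 105 * x1 * x2 ^ 2 * x3 + 10 * x1 ^ 2 * x3 ^ 2 +
      15 * x1 ^ 2 * x2 * x4 - x1 ^ 3 * x5)))
  have h' : HasSum (fun k : ℕ => x1 ^ 9 *
      (Real.exp (-t * ((k : ℝ) + 1) ^ 2) * (Polynomial.derivative^[5]
      (Polynomial.Chebyshev.T ℝ ((k + 1 : ℕ) : ℤ))).eval (Real.cos (√w))))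
      (LL x1 x2 x3 x4 x5 (GG (-1) 1 t 1 w) (GG (-1) 1 t 2 w) (GG (-1) 1 t 3 w) (GG (-1) 1 t 4 w)
        (GG (-1) 1 t 5 w)) := by
    unfold LL
    refine h.congr_fun ?_
    intro k
    have := hcj k
    unfold LL at this
    rw [mul_left_comm, ← this]
    ring
  refine ⟨?_, h'.summable⟩
  rw [← tsum_mul_left, h'.tsum_eq]
  unfold LL
  ring

lemma q_formula (t d : ℝ) (ht : 0 < t) (hd : 0 < d) (hd' : d < π) :
    64 * π ^ 6 * NN (-1) 1 (d ^ 2) ^ 9 * qS11 t (Real.cos d) =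
    Real.exp (25 * t) *
    (√(π / t) * (Real.exp (-(1 / (4 * t)) * d ^ 2) *
    LL (NN (-1) 1 (d ^ 2)) (NN (-1) 2 (d ^ 2)) (NN (-1) 3 (d ^ 2)) (NN (-1) 4 (d ^ 2))
      (NN (-1) 5 (d ^ 2))
      (JJ (-(1 / (4 * t))) (KK 1 (π / t) (π ^ 2 / t)) 1 0 (d ^ 2))
      (JJ (-(1 / (4 * t))) (KK 1 (π / t) (π ^ 2 / t)) 2 0 (d ^ 2))
      (JJ (-(1 / (4 * t))) (KK 1 (π / t) (π ^ 2 / t)) 3 0 (d ^ 2))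
      (JJ (-(1 / (4 * t))) (KK 1 (π / t) (π ^ 2 / t)) 4 0 (d ^ 2))
      (JJ (-(1 / (4 * t))) (KK 1 (π / t) (π ^ 2 / t)) 5 0 (d ^ 2)))) := by
  have hw : 0 < d ^ 2 := by positivity
  obtain ⟨h1, h2⟩ := LL_theta t (d ^ 2) ht hw
  rw [Real.sqrt_sq hd.le] at h1 h2
  simp only [theta_jet t ht _ _ hw] at h1
  have hx : NN (-1) 1 (d ^ 2) ≠ 0 := by
    have := HH_one_sin d
    have hs := Real.sin_pos_of_pos_of_lt_pi hd hd'
    unfold NN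
    rw [neg_one_mul]
    intro h
    have h0 : HH 1 (-d ^ 2) = 0 := by simpa using h
    rw [h0] at this
    linarith
  have h3 := (summable_mul_left_iff (pow_ne_zero 9 hx)).1 h2
  rw [← h3.sum_add_tsum_nat_add 4] at h1
  have hz : ∑ i ∈ Finset.range 4, Real.exp (-t * ((i : ℝ) + 1) ^ 2) * (Polynomial.derivative^[5]
      (Polynomial.Chebyshev.T ℝ ((i + 1 : ℕ) : ℤ))).eval (Real.cos d) = 0 := by
    refine Finset.sum_eq_zero fun i hi => ?_
    rw [T_iter_small (i + 1) (by simp at hi; omega), mul_zero]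
  have hq : ∑' i : ℕ, Real.exp (-t * (((i + 4 : ℕ) : ℝ) + 1) ^ 2) * (Polynomial.derivative^[5]
      (Polynomial.Chebyshev.T ℝ ((i + 4 + 1 : ℕ) : ℤ))).eval (Real.cos d) =
      384 * Real.exp (-(25 * t)) * ∑' m : ℕ, (m + 5) * Real.exp (-((m * (m + 10) : ℕ) : ℝ) * t) *
        geg5 m (Real.cos d) := by
    rw [← tsum_mul_left]
    refine tsum_congr fun m => ?_
    rw [show m + 4 + 1 = m + 5 by ring, T_iter_eval]
    have : Real.exp (-t * (((m + 4 : ℕ) : ℝ) + 1) ^ 2) =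
      Real.exp (-(25 * t)) * Real.exp (-((m * (m + 10) : ℕ) : ℝ) * t) := by
      rw [← Real.exp_add]; congr 1; push_cast; ring
    rw [this]; ring
  rw [hz, hq, zero_add] at h1
  have hg : Real.Gamma 5 = 24 := by
    have := Real.Gamma_nat_eq_factorial 4
    rw [show (5 : ℝ) = ((4 : ℕ) : ℝ) + 1 by norm_num, this]
    norm_num [Nat.factorial]
  have he : Real.exp (25 * t) * Real.exp (-(25 * t)) = 1 := by rw [← Real.exp_add]; simp
  unfold qS11
  rw [hg]
  generalize ∑' m : ℕ, ((m : ℝ) + 5) * Real.exp (-((m * (m + 10) : ℕ) : ℝ) * t) *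
        geg5 m (Real.cos d) = S at *
  have hpi := Real.pi_pos.ne'
  have h4 : 64 * π ^ 6 * NN (-1) 1 (d ^ 2) ^ 9 * (24 / (2 * π ^ 6) * S) =
      768 * NN (-1) 1 (d ^ 2) ^ 9 * S := by field_simp; ring
  rw [h4]
  have h5 : 768 * NN (-1) 1 (d ^ 2) ^ 9 * S = Real.exp (25 * t) *
     (2 * (NN (-1) 1 (d ^ 2) ^ 9 * (384 * Real.exp (-(25 * t)) * S))) := by
    linear_combination (-768 * NN (-1) 1 (d ^ 2) ^ 9 * S) * he
  rw [h5, ← h1]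
  unfold LL
  ring


lemma rho_bound_one (ε : ℝ) (hε : 0 < ε) (hε' : ε < π) (i : ℕ) :
    ∃ D : ℝ, 0 ≤ D ∧ ∀ t : ℝ, 0 < t → ∀ w : ℝ, 0 ≤ w → w ≤ (π - ε) ^ 2 →
      |KK 1 (π / t) (π ^ 2 / t) i w - (if i = 0 then 1 else 0)| ≤ D * t ^ 2 := by
  have hpi := Real.pi_pos
  have hS : Summable fun k : ℕ => 1 / ((k : ℝ) + 1) ^ 2 := by
    have := (summable_nat_add_iff 1).2 (Real.summable_one_div_nat_pow.2 (one_lt_two))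
    simpa using this
  set c : ℝ := (1 / ε) ^ (2 * i) * (2 * i + 2).factorial / (π * ε) ^ 2 with hc
  have hc0 : 0 ≤ c := by positivity
  refine ⟨2 * (c * ∑' k : ℕ, 1 / ((k : ℝ) + 1) ^ 2),
    mul_nonneg two_pos.le (mul_nonneg hc0 (tsum_nonneg fun k => by positivity)), ?_⟩
  intro t ht w hw hw'
  have hK : KK 1 (π / t) (π ^ 2 / t) i w - (if i = 0 then 1 else 0) =
      2 * GG 1 (π / t) (π ^ 2 / t) i w := by unfold KK; ring
  rw [hK, abs_mul, abs_two, mul_assoc]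
  refine mul_le_mul_of_nonneg_left ?_ two_pos.le
  have hsum := (hS.hasSum.mul_left (c * t ^ 2))
  have := tsum_of_norm_bounded hsum (f := fun k : ℕ => Real.exp (-(π ^ 2 / t) * ((k : ℝ) + 1) ^ 2) *
    ((1 * (π / t * ((k : ℝ) + 1)) ^ 2) ^ i * HH i (1 * (π / t * ((k : ℝ) + 1)) ^ 2 * w))) ?_
  · calc |GG 1 (π / t) (π ^ 2 / t) i w| ≤ _ := this
      _ = _ := by ring
  intro k
  refine (GG_term_le 1 (π / t) (π ^ 2 / t) (by simp) (by positivity) i (π - ε) w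
    (by linarith) (by rwa [abs_of_nonneg hw]) k).trans ?_
  have hx1 : (1 : ℝ) ≤ (k : ℝ) + 1 := by
    have : (0 : ℝ) ≤ k := by positivity
    linarith
  set x : ℝ := (k : ℝ) + 1
  have hx : 0 < x := by linarith
  set z : ℝ := π * ε * x / t with hz
  have hz0 : 0 < z := by positivity
  have e1 : Real.exp (-(π ^ 2 / t) * x ^ 2) * Real.exp (π / t * x * (π - ε)) ≤ Real.exp (-z) := by
    rw [← Real.exp_add]
    apply Real.exp_le_exp.2
    have : -z - (-(π ^ 2 / t) * x ^ 2 + π / t * x * (π - ε)) = π ^ 2 * x * (x - 1) / t := by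
      rw [hz]; field_simp; ring
    have h2 : 0 ≤ π ^ 2 * x * (x - 1) / t := by
      have : 0 ≤ x - 1 := by linarith
      positivity
    linarith
  have e2 : Real.exp (-z) ≤ (2 * i + 2).factorial / z ^ (2 * i + 2) := by
    have h3 := Real.pow_div_factorial_le_exp z hz0.le (2 * i + 2)
    rw [Real.exp_neg, ← inv_div]
    exact inv_anti₀ (by positivity) h3
  calc Real.exp (-(π ^ 2 / t) * x ^ 2) * (((π / t * x) ^ 2) ^ i * Real.exp (π / t * x * (π - ε)))
      = ((π / t * x) ^ 2) ^ i *
        (Real.exp (-(π ^ 2 / t) * x ^ 2) * Real.exp (π / t * x * (π - ε))) := by ring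
    _ ≤ ((π / t * x) ^ 2) ^ i * ((2 * i + 2).factorial / z ^ (2 * i + 2)) :=
        mul_le_mul_of_nonneg_left (e1.trans e2) (by positivity)
    _ = c * t ^ 2 * (1 / x ^ 2) := by
        have h5 : π / t * x = z * (1 / ε) := by rw [hz]; field_simp
        have h6 : c * t ^ 2 * (1 / x ^ 2) = (1 / ε) ^ (2 * i) * (2 * i + 2).factorial / z ^ 2 := by
          rw [hc, hz]; field_simp
        rw [h6, h5, ← pow_mul, mul_pow, pow_add z]
        field_simp

lemma rho_bound (ε : ℝ) (hε : 0 < ε) (hε' : ε < π) :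
    ∃ D : ℝ, 0 ≤ D ∧ ∀ t : ℝ, 0 < t → ∀ w : ℝ, 0 ≤ w → w ≤ (π - ε) ^ 2 → ∀ i ≤ 5,
      |KK 1 (π / t) (π ^ 2 / t) i w - (if i = 0 then 1 else 0)| ≤ D * t ^ 2 := by
  choose D hD0 hD using rho_bound_one ε hε hε'
  refine ⟨∑ i ∈ Finset.range 6, D i, Finset.sum_nonneg fun i _ => hD0 i, ?_⟩
  intro t ht w hw hw' i hi
  refine (hD i t ht w hw hw').trans (mul_le_mul_of_nonneg_right ?_ (by positivity))
  exact Finset.single_le_sum (f := D) (fun i _ => hD0 i) (by simp; omega)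

lemma JJ_bound (K : ℕ → ℝ → ℝ) (t w B : ℝ) (ht : 0 < t) (ht1 : t ≤ 1)
    (hK : ∀ i ≤ 5, |K i w - (if i = 0 then 1 else 0)| ≤ B) (j : ℕ) :
    ∀ i, i + j ≤ 5 →
    |t ^ j * JJ (-(1 / (4 * t))) K j i w - (if i = 0 then 1 else 0) * (-1 / 4) ^ j| ≤ 2 ^ j * B := by
  induction j with
  | zero => intro i hi; simpa [JJ] using hK i (by omega)
  | succ j ih =>
    intro i hi
    have h1 := ih i (by omega)
    have h2 := ih (i + 1) (by omega)
    simp only [Nat.add_eq_zero_iff, one_ne_zero, and_false, if_false, zero_mul, sub_zero] at h2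
    have he : t ^ (j + 1) * JJ (-(1 / (4 * t))) K (j + 1) i w
        - (if i = 0 then 1 else 0) * (-1 / 4) ^ (j + 1) =
        (-1 / 4) * (t ^ j * JJ (-(1 / (4 * t))) K j i w - (if i = 0 then 1 else 0) * (-1 / 4) ^ j) +
        t * (t ^ j * JJ (-(1 / (4 * t))) K j (i + 1) w) := by
      simp only [JJ]
      rw [pow_succ, pow_succ]
      field_simp
      ring
    rw [he]
    refine (abs_add_le _ _).trans ?_
    rw [abs_mul, abs_mul, abs_of_pos ht]
    have h3 : t * |t ^ j * JJ (-(1 / (4 * t))) K j (i + 1) w| ≤ 1 * (2 ^ j * B) :=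
      mul_le_mul ht1 h2 (abs_nonneg _) zero_le_one
    have h4 : |(-1 / 4 : ℝ)| = 1 / 4 := by norm_num [abs_div]
    have h5 : 0 ≤ 2 ^ j * B := (abs_nonneg _).trans h2
    rw [h4, pow_succ]
    linarith

lemma NN_one_ne (w : ℝ) (hw : 0 ≤ w) (hw' : w < π ^ 2) : NN (-1) 1 w ≠ 0 := by
  unfold NN
  rcases hw.eq_or_lt with h | h
  · rw [← h]; simp [HH_one_zero]
  · have h1 := HH_one_sin (√w)
    rw [Real.sq_sqrt hw] at h1
    have hs := Real.sin_pos_of_pos_of_lt_pi (Real.sqrt_pos.2 h)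
      ((Real.sqrt_lt_sqrt hw hw').trans_eq (Real.sqrt_sq Real.pi_pos.le))
    intro h0
    have h2 : HH 1 (-w) = 0 := by simpa using h0
    rw [h2] at h1
    linarith

lemma NN_continuous (j : ℕ) : Continuous (NN (-1) j) :=
  continuous_iff_continuousAt.2 fun s => (NN_hasDerivAt (-1) j s).continuousAt

lemma ratio_bound (b : ℝ) (hb : 0 ≤ b) (hb' : b < π) (j : ℕ) :
    ∃ M : ℝ, 0 ≤ M ∧ ∀ w, 0 ≤ w → w ≤ b ^ 2 → |NN (-1) j w / NN (-1) 1 w| ≤ M := by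
  have hc : ContinuousOn (fun w => NN (-1) j w / NN (-1) 1 w) (Set.Icc 0 (b ^ 2)) := by
    refine (NN_continuous j).continuousOn.div (NN_continuous 1).continuousOn ?_
    intro w hw
    refine NN_one_ne w hw.1 (hw.2.trans_lt ?_)
    gcongr
  obtain ⟨M, hM⟩ := isCompact_Icc.exists_bound_of_continuousOn hc
  refine ⟨|M|, abs_nonneg _, fun w h1 h2 => ?_⟩
  have := hM w ⟨h1, h2⟩
  rw [Real.norm_eq_abs] at this
  exact this.trans (le_abs_self M)

lemma Q_formula (t d : ℝ) (ht : 0 < t) (hd : 0 < d) (hd' : d < π) (L : ℝ)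
    (h : 64 * π ^ 6 * NN (-1) 1 (d ^ 2) ^ 9 * qS11 t (Real.cos d) =
      Real.exp (25 * t) * (√(π / t) * (Real.exp (-(1 / (4 * t)) * d ^ 2) * L))) :
    (4 * π * t) ^ ((11 : ℝ) / 2) * (Real.sin d / d) ^ 5 * Real.exp (d ^ 2 / (4 * t)) *
            qS11 t (Real.cos d) = Real.exp (25 * t) * (-(1024 * t ^ 5) *
              (L / NN (-1) 1 (d ^ 2) ^ 4)) := by
  have hpi := Real.pi_pos
  have hx : NN (-1) 1 (d ^ 2) ≠ 0 := NN_one_ne _ (by positivity) (by gcongr)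
  have hx1 : Real.sin d / d = -2 * NN (-1) 1 (d ^ 2) := by
    have := HH_one_sin d
    unfold NN
    rw [neg_one_mul, ← this]
    field_simp
  have h1 : (4 * π * t) ^ ((11 : ℝ) / 2) = (4 * π * t) ^ 5 * √(4 * π * t) := by
    rw [Real.sqrt_eq_rpow, ← Real.rpow_natCast, ← Real.rpow_add (by positivity)]
    norm_num
  have h2 : √(4 * π * t) * √(π / t) = 2 * π := by
    rw [← Real.sqrt_mul (by positivity), show 4 * π * t * (π / t) = (2 * π) ^ 2 by
      field_simp; ring, Real.sqrt_sq (by positivity)]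
  have h3 : Real.exp (d ^ 2 / (4 * t)) * Real.exp (-(1 / (4 * t)) * d ^ 2) = 1 := by
    rw [← Real.exp_add]; simp; ring
  have hq : qS11 t (Real.cos d) = Real.exp (25 * t) * (√(π / t) *
      (Real.exp (-(1 / (4 * t)) * d ^ 2) * L)) / (64 * π ^ 6 * NN (-1) 1 (d ^ 2) ^ 9) := by
    rw [← h]; field_simp
  rw [hq, h1, hx1]
  generalize NN (-1) 1 (d ^ 2) = x at *
  calc _ = (4 * π * t) ^ 5 * (-2 * x) ^ 5 * (√(4 * π * t) * √(π / t)) *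
        (Real.exp (d ^ 2 / (4 * t)) * Real.exp (-(1 / (4 * t)) * d ^ 2)) * Real.exp (25 * t) * L /
        (64 * π ^ 6 * x ^ 9) := by ring
    _ = _ := by
      rw [h2, h3]
      field_simp
      ring

lemma final_alg (t a4 a3 a2 a1 u1 u2 u3 u4 u5 M4 M3 M2 M1 B : ℝ) (ht : 0 < t) (ht1 : t ≤ 1 / 25)
    (hB : 0 ≤ B)
    (h4 : |a4| ≤ M4) (h3 : |a3| ≤ M3) (h2 : |a2| ≤ M2) (h1 : |a1| ≤ M1)
    (v1 : |u1 - (-1 / 4) ^ 1| ≤ B * t ^ 2) (v2 : |u2 - (-1 / 4) ^ 2| ≤ B * t ^ 2)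
    (v3 : |u3 - (-1 / 4) ^ 3| ≤ B * t ^ 2)
    (v4 : |u4 - (-1 / 4) ^ 4| ≤ B * t ^ 2) (v5 : |u5 - (-1 / 4) ^ 5| ≤ B * t ^ 2) :
    |Real.exp (25 * t) * (-1024 * (u5 + a4 * t * u4 + a3 * t ^ 2 * u3 + a2 * t ^ 3 * u2
      + a1 * t ^ 4 * u1)) - 1 - (25 - 4 * a4) * t| ≤
      (3 * (1024 * (B + M4 * B + (M3 + M2 + M1) * (1 + B))) + 625 * (1 + 4 * M4) + 100 * M4)
        * t ^ 2 := by
  have hM4 := (abs_nonneg _).trans h4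
  have hM3 := (abs_nonneg _).trans h3
  have hM2 := (abs_nonneg _).trans h2
  have hM1 := (abs_nonneg _).trans h1
  have htt : t ≤ 1 := by linarith
  have ht2 : t ^ 2 ≤ 1 := pow_le_one₀ ht.le htt
  have ub : ∀ (u : ℝ) (j : ℕ), |u - (-1 / 4) ^ j| ≤ B * t ^ 2 → |u| ≤ 1 + B := by
    intro u j h
    have e : |((-1 / 4 : ℝ)) ^ j| ≤ 1 := by
      rw [abs_pow]; apply pow_le_one₀ (abs_nonneg _); norm_num [abs_div]
    have : |u| ≤ |u - (-1 / 4) ^ j| + |((-1 / 4 : ℝ)) ^ j| := by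
      simpa using abs_add_le (u - (-1 / 4) ^ j) ((-1 / 4 : ℝ) ^ j)
    have : B * t ^ 2 ≤ B := mul_le_of_le_one_right hB ht2
    linarith
  have hu3 := ub _ _ v3
  have hu2 := ub _ _ v2
  have hu1 := ub _ _ v1
  set E0 : ℝ := -1024 * (u5 + a4 * t * u4 + a3 * t ^ 2 * u3 + a2 * t ^ 3 * u2
      + a1 * t ^ 4 * u1) - 1 + 4 * a4 * t with hE0
  have t4 : |a4 * t * (u4 - (-1 / 4) ^ 4)| ≤ M4 * B * t ^ 2 := by
    rw [abs_mul, abs_mul, abs_of_pos ht]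
    calc _ ≤ M4 * 1 * (B * t ^ 2) := by gcongr
      _ = _ := by ring
  have t3 : |a3 * t ^ 2 * u3| ≤ M3 * (1 + B) * t ^ 2 := by
    rw [abs_mul, abs_mul, abs_of_pos (by positivity : (0:ℝ) < t ^ 2)]
    calc _ ≤ M3 * t ^ 2 * (1 + B) := by gcongr
      _ = _ := by ring
  have t2 : |a2 * t ^ 3 * u2| ≤ M2 * (1 + B) * t ^ 2 := by
    rw [abs_mul, abs_mul, abs_of_pos (by positivity : (0:ℝ) < t ^ 3)]
    calc _ ≤ M2 * t ^ 2 * (1 + B) := by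
          have : t ^ 3 ≤ t ^ 2 := pow_le_pow_of_le_one ht.le htt (by norm_num)
          gcongr
      _ = _ := by ring
  have t1 : |a1 * t ^ 4 * u1| ≤ M1 * (1 + B) * t ^ 2 := by
    rw [abs_mul, abs_mul, abs_of_pos (by positivity : (0:ℝ) < t ^ 4)]
    calc _ ≤ M1 * t ^ 2 * (1 + B) := by
          have : t ^ 4 ≤ t ^ 2 := pow_le_pow_of_le_one ht.le htt (by norm_num)
          gcongr
      _ = _ := by ring
  have hE : |E0| ≤ 1024 * (B + M4 * B + (M3 + M2 + M1) * (1 + B)) * t ^ 2 := by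
    have e : E0 = -1024 * ((u5 - (-1 / 4) ^ 5) + a4 * t * (u4 - (-1 / 4) ^ 4) + a3 * t ^ 2 * u3
      + a2 * t ^ 3 * u2 + a1 * t ^ 4 * u1) := by rw [hE0]; ring
    rw [e, abs_mul]
    have s1 := abs_add_le (u5 - (-1 / 4) ^ 5) (a4 * t * (u4 - (-1 / 4) ^ 4))
    have s2 := abs_add_le ((u5 - (-1 / 4) ^ 5) + a4 * t * (u4 - (-1 / 4) ^ 4)) (a3 * t ^ 2 * u3)
    have s3 := abs_add_le ((u5 - (-1 / 4) ^ 5) + a4 * t * (u4 - (-1 / 4) ^ 4) + a3 * t ^ 2 * u3)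
      (a2 * t ^ 3 * u2)
    have s4 := abs_add_le ((u5 - (-1 / 4) ^ 5) + a4 * t * (u4 - (-1 / 4) ^ 4) + a3 * t ^ 2 * u3
      + a2 * t ^ 3 * u2) (a1 * t ^ 4 * u1)
    have h1024 : |(-1024 : ℝ)| = 1024 := by norm_num
    rw [h1024]
    linarith
  have hexp : |Real.exp (25 * t) - 1 - 25 * t| ≤ 625 * t ^ 2 := by
    have := Real.abs_exp_sub_one_sub_id_le (x := 25 * t) (by
      rw [abs_of_pos (by positivity)]; linarith)
    calc _ ≤ _ := this
      _ = _ := by ring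
  have hexp3 : |Real.exp (25 * t)| ≤ 3 := by
    rw [abs_of_pos (Real.exp_pos _)]
    have : Real.exp (25 * t) ≤ Real.exp 1 := Real.exp_le_exp.2 (by linarith)
    have := Real.exp_one_lt_d9
    linarith
  have hfin : Real.exp (25 * t) * (-1024 * (u5 + a4 * t * u4 + a3 * t ^ 2 * u3 + a2 * t ^ 3 * u2
      + a1 * t ^ 4 * u1)) - 1 - (25 - 4 * a4) * t =
      Real.exp (25 * t) * E0 + (Real.exp (25 * t) - 1 - 25 * t) * (1 - 4 * a4 * t) +
        (-100 * a4 * t ^ 2) := by rw [hE0]; ring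
  rw [hfin]
  have w1 : |Real.exp (25 * t) * E0| ≤
      3 * (1024 * (B + M4 * B + (M3 + M2 + M1) * (1 + B)) * t ^ 2) := by
    rw [abs_mul]; gcongr
  have w2 : |(Real.exp (25 * t) - 1 - 25 * t) * (1 - 4 * a4 * t)| ≤
      625 * t ^ 2 * (1 + 4 * M4) := by
    rw [abs_mul]
    have : |1 - 4 * a4 * t| ≤ 1 + 4 * M4 := by
      have h5 : |a4 * t| ≤ M4 * 1 := by rw [abs_mul, abs_of_pos ht]; gcongr
      have := abs_le.1 h5
      rw [abs_le]; constructor <;> linarith [this.1, this.2]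
    gcongr
  have w3 : |-100 * a4 * t ^ 2| ≤ 100 * M4 * t ^ 2 := by
    rw [abs_mul, abs_mul, abs_of_pos (by positivity : (0:ℝ) < t ^ 2)]
    have : |(-100 : ℝ)| = 100 := by norm_num
    rw [this]; gcongr
  have s1 := abs_add_le (Real.exp (25 * t) * E0)
    ((Real.exp (25 * t) - 1 - 25 * t) * (1 - 4 * a4 * t))
  have s2 := abs_add_le (Real.exp (25 * t) * E0 +
    (Real.exp (25 * t) - 1 - 25 * t) * (1 - 4 * a4 * t)) (-100 * a4 * t ^ 2)
  linarith


lemma coef_bound (b : ℝ) (hb : 0 ≤ b) (hb' : b < π) (φ : ℝ × ℝ × ℝ × ℝ → ℝ) (hφ : Continuous φ) :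
    ∃ M : ℝ, ∀ w, 0 ≤ w → w ≤ b ^ 2 → |φ (NN (-1) 2 w / NN (-1) 1 w, NN (-1) 3 w / NN (-1) 1 w,
      NN (-1) 4 w / NN (-1) 1 w, NN (-1) 5 w / NN (-1) 1 w)| ≤ M := by
  have hr : ∀ j, ContinuousOn (fun w => NN (-1) j w / NN (-1) 1 w) (Set.Icc 0 (b ^ 2)) := by
    intro j
    refine (NN_continuous j).continuousOn.div (NN_continuous 1).continuousOn ?_
    intro w hw
    refine NN_one_ne w hw.1 (hw.2.trans_lt ?_)
    gcongr
  have hc := hφ.comp_continuousOn ((hr 2).prodMk ((hr 3).prodMk ((hr 4).prodMk (hr 5))))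
  obtain ⟨M, hM⟩ := isCompact_Icc.exists_bound_of_continuousOn hc
  exact ⟨M, fun w h1 h2 => hM w ⟨h1, h2⟩⟩

/-- Uniform small-time asymptotics of the heat kernel of `S^11` at `cos δ`, uniformly for
`δ ∈ (0, π − ε]`. -/
theorem qS11_small_time_cos (ε : ℝ) (hε : ε ∈ Set.Ioo 0 π) :
    ∃ C > (0 : ℝ), ∃ t₀ > (0 : ℝ), ∀ t ∈ Set.Ioo (0 : ℝ) t₀, ∀ δ ∈ Set.Ioc (0 : ℝ) (π - ε),
      |(4 * π * t) ^ ((11 : ℝ) / 2) * (Real.sin δ / δ) ^ 5 * Real.exp (δ ^ 2 / (4 * t)) *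
            qS11 t (Real.cos δ)
          - 1 - (25 - 20 * (Real.sin δ - δ * Real.cos δ) / (δ ^ 2 * Real.sin δ)) * t|
        ≤ C * t ^ 2 := by
  obtain ⟨hε0, hε1⟩ := hε
  obtain ⟨D, hD0, hD⟩ := rho_bound ε hε0 hε1
  have hb : 0 ≤ π - ε := by linarith
  have hb' : π - ε < π := by linarith
  obtain ⟨M4, hM4⟩ := coef_bound _ hb hb' (fun p => -10 * p.1) (by fun_prop)
  obtain ⟨M3, hM3⟩ := coef_bound _ hb hb' (fun p => 45 * p.1 ^ 2 - 10 * p.2.1) (by fun_prop)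
  obtain ⟨M2, hM2⟩ := coef_bound _ hb hb'
    (fun p => -105 * p.1 ^ 3 + 60 * p.1 * p.2.1 - 5 * p.2.2.1) (by fun_prop)
  obtain ⟨M1, hM1⟩ := coef_bound _ hb hb'
    (fun p => 105 * p.1 ^ 4 - 105 * p.1 ^ 2 * p.2.1 + 10 * p.2.1 ^ 2 + 15 * p.1 * p.2.2.1
      - p.2.2.2) (by fun_prop)
  set C0 : ℝ := 3 * (1024 * (32 * D + M4 * (32 * D) + (M3 + M2 + M1) * (1 + 32 * D))) +
    625 * (1 + 4 * M4) + 100 * M4 with hC0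
  refine ⟨|C0| + 1, by positivity, 1 / 25, by norm_num, ?_⟩
  rintro t ⟨ht, ht1⟩ d ⟨hd, hd1⟩
  have hdpi : d < π := by linarith
  have hw0 : 0 < d ^ 2 := by positivity
  have hw1 : d ^ 2 ≤ (π - ε) ^ 2 := by gcongr
  have hJ : ∀ j ≤ 5, |t ^ j * JJ (-(1 / (4 * t))) (KK 1 (π / t) (π ^ 2 / t)) j 0 (d ^ 2)
      - (-1 / 4) ^ j| ≤ 32 * D * t ^ 2 := by
    intro j hj
    have h := JJ_bound (KK 1 (π / t) (π ^ 2 / t)) t (d ^ 2) (D * t ^ 2) ht (by linarith)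
      (hD t ht _ hw0.le hw1) j 0 (by omega)
    simp only [if_true, one_mul] at h
    refine h.trans ?_
    have : (2 : ℝ) ^ j ≤ 2 ^ 5 := pow_le_pow_right₀ one_le_two hj
    calc (2 : ℝ) ^ j * (D * t ^ 2) ≤ 2 ^ 5 * (D * t ^ 2) := by gcongr
      _ = _ := by ring
  have hx := NN_one_ne (d ^ 2) hw0.le (by gcongr)
  rw [Q_formula t d ht hd hdpi _ (q_formula t d ht hd hdpi)]
  have ha4 := hM4 _ hw0.le hw1
  have ha3 := hM3 _ hw0.le hw1
  have ha2 := hM2 _ hw0.le hw1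
  have ha1 := hM1 _ hw0.le hw1
  dsimp only at ha4 ha3 ha2 ha1
  have hfin := final_alg t _ _ _ _ _ _ _ _ _ M4 M3 M2 M1 (32 * D) ht ht1.le (by positivity)
    ha4 ha3 ha2 ha1 (hJ 1 (by norm_num)) (hJ 2 (by norm_num)) (hJ 3 (by norm_num))
    (hJ 4 (by norm_num)) (hJ 5 (by norm_num))
  have hcoef : 25 - 20 * (Real.sin d - d * Real.cos d) / (d ^ 2 * Real.sin d) =
      25 - 4 * (-10 * (NN (-1) 2 (d ^ 2) / NN (-1) 1 (d ^ 2))) := by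
    have s1 := HH_one_sin d
    have s2 := HH_two_eq d
    have hs := (Real.sin_pos_of_pos_of_lt_pi hd hdpi).ne'
    have e1 : NN (-1) 1 (d ^ 2) = - HH 1 (-d ^ 2) := by simp [NN]
    have e2 : NN (-1) 2 (d ^ 2) = HH 2 (-d ^ 2) := by simp [NN]
    rw [e1] at hx
    rw [e1, e2]
    have hh : HH 1 (-d ^ 2) ≠ 0 := by simpa using hx
    have hc : Real.cos d = 2 * HH 1 (-d ^ 2) - 4 * d ^ 2 * HH 2 (-d ^ 2) := by linarith
    rw [hc, ← s1]
    field_simp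
    ring
  rw [hcoef]
  refine le_trans (le_of_eq ?_) (hfin.trans (mul_le_mul_of_nonneg_right
    ((le_abs_self C0).trans (by linarith)) (by positivity)))
  congr 4
  unfold LL
  field_simp
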